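/- arXiv:1511.02038 — 2 statements merged into one kernel-verified Lean document; each statement's English description precedes it below -/
import Mathlib

section
/- Let G be a 2-tree and uv an edge of G. Then the common neighbors of u and v are pairwise non-adjacent, i.e., for any two distinct vertices w1, w2 with w1, w2 ∈ N_G(u) ∩ N_G(v), the pair w1w2 is not an edge of G. -/
open SimpleGraph

/-- `IsTwoTree V G` : the simple graph `G` on `ℕ` with support (vertex set) `V` is a 2-tree,
defined inductively: a single edge is a 2-tree, and adding a new vertex `z` adjacent to
exactly the two endpoints `u, v` of an existing edge yields a 2-tree. -/
inductive IsTwoTree : Finset ℕ → SimpleGraph ℕ → Prop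
  | base (u v : ℕ) (huv : u ≠ v) :
      IsTwoTree {u, v} (fromEdgeSet {s(u, v)})
  | grow {V : Finset ℕ} {G : SimpleGraph ℕ} (hG : IsTwoTree V G)
      (u v z : ℕ) (huv : G.Adj u v) (hz : z ∉ V) (hzu : z ≠ u) (hzv : z ≠ v) :
      IsTwoTree (insert z V) (G ⊔ fromEdgeSet {s(z, u), s(z, v)})

/-!
The claim says that a 2-tree contains no `K₄`. This is an induction on the construction: a single
edge has no `K₄`, and a newly attached vertex `z` has only two neighbours in the new graph, so it
cannot lie in a `K₄`; a `K₄` in the new graph would therefore already be present in the old one.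
That `z` has no old neighbours is `IsTwoTree.mem_of_adj`: edges of `G` join vertices of `V`.
-/

theorem IsTwoTree.mem_of_adj {V : Finset ℕ} {G : SimpleGraph ℕ} (hG : IsTwoTree V G) :
    ∀ a b, G.Adj a b → a ∈ V := by
  induction hG with
  | base u v huv =>
    intro a b h
    simp only [fromEdgeSet_adj, Set.mem_singleton_iff, Sym2.eq_iff] at h
    grind
  | grow hG u v z huv hz hzu hzv ih =>
    intro a b h
    have := ih _ _ huv
    have := ih _ _ huv.symm
    simp only [sup_adj, fromEdgeSet_adj, Set.mem_insert_iff, Set.mem_singleton_iff,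
      Sym2.eq_iff] at h
    grind

/-- A 2-tree contains no `K₄`. -/
theorem IsTwoTree.not_four_clique {V : Finset ℕ} {G : SimpleGraph ℕ} (hG : IsTwoTree V G) :
    ∀ a b c d, G.Adj a b → G.Adj a c → G.Adj a d → G.Adj b c → G.Adj b d → ¬ G.Adj c d := by
  induction hG with
  | base u v huv =>
    intro a b c d
    simp only [fromEdgeSet_adj, Set.mem_singleton_iff, Sym2.eq_iff]
    grind
  | @grow V G hG u v z huv hz hzu hzv ih =>
    have hzl : ∀ x, ¬ G.Adj z x := fun x h => hz (hG.mem_of_adj _ _ h)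
    set H := G ⊔ fromEdgeSet {s(z, u), s(z, v)} with hH
    have hadj : ∀ x, H.Adj z x → x = u ∨ x = v := by
      intro x h
      simp only [hH, sup_adj, fromEdgeSet_adj, Set.mem_insert_iff, Set.mem_singleton_iff,
        Sym2.eq_iff] at h
      grind
    have hold : ∀ x y, x ≠ z → y ≠ z → H.Adj x y → G.Adj x y := by
      intro x y hx hy h
      simp only [hH, sup_adj, fromEdgeSet_adj, Set.mem_insert_iff, Set.mem_singleton_iff,
        Sym2.eq_iff] at h
      grind
    -- Among three distinct neighbours of `z`, two would coincide.
    have hthree : ∀ x y t, H.Adj z x → H.Adj z y → H.Adj z t →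
        H.Adj x y → H.Adj x t → H.Adj y t → False := by
      intro x y t hx hy ht hxy hxt hyt
      have := hxy.ne
      have := hxt.ne
      have := hyt.ne
      have := hadj _ hx
      have := hadj _ hy
      have := hadj _ ht
      grind
    intro a b c d hab hac had hbc hbd hcd
    have ha : a ≠ z := by
      rintro rfl
      exact hthree b c d hab hac had hbc hbd hcd
    have hb : b ≠ z := by
      rintro rfl
      exact hthree a c d hab.symm hbc hbd hac had hcd
    have hc : c ≠ z := by
      rintro rfl
      exact hthree a b d hac.symm hbc.symm hcd hab had hbd
    have hd : d ≠ z := by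
      rintro rfl
      exact hthree a b c had.symm hbd.symm hcd.symm hab hac hbc
    exact ih a b c d (hold _ _ ha hb hab) (hold _ _ ha hc hac) (hold _ _ ha hd had)
      (hold _ _ hb hc hbc) (hold _ _ hb hd hbd) (hold _ _ hc hd hcd)

/-- In a 2-tree, the common neighbors of the endpoints of any edge are pairwise
non-adjacent. -/
theorem two_tree_common_neighbors_pairwise_nonadjacent
    (V : Finset ℕ) (G : SimpleGraph ℕ) (hG : IsTwoTree V G)
    (u v : ℕ) (huv : G.Adj u v) (w₁ w₂ : ℕ) (hne : w₁ ≠ w₂)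
    (hw₁ : w₁ ∈ G.neighborSet u ∩ G.neighborSet v)
    (hw₂ : w₂ ∈ G.neighborSet u ∩ G.neighborSet v) :
    ¬ G.Adj w₁ w₂ :=
  hG.not_four_clique u v w₁ w₂ huv hw₁.1 hw₂.1 hw₁.2 hw₂.2
end

section
/- Let G be a 2-tree on at least 3 vertices. Then G has a Hamiltonian cycle if and only if G is 3-pyramid free. -/
/-!
In a 2-tree, three distinct common neighbours of the ends of an edge `uv` are pairwise non-adjacent
(there is no `K₄`), so together with `u, v` they induce a 3-pyramid. Hence being 3-pyramid free
means that every edge has at most two common neighbours (`containsNPyramid_three_iff`).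

Say that an edge is a boundary edge if it has at most one common neighbour. The theorem follows by
induction on the construction of the 2-tree from a statement about all Hamiltonian cycles, seen as
sets of edges: if a Hamiltonian cycle exists then every edge has at most two common neighbours and
the cycle only uses boundary edges (`HamEdges.boundary`); conversely, if every edge has at most two
common neighbours then there is a Hamiltonian cycle through all boundary edges (`exists_hamEdges`).
When a vertex `z` is attached to the edge `uv`, the only edge whose common neighbourhood changes is
`uv`, which gains `z`. A Hamiltonian cycle of the new graph runs through `u, z, v`, and replacing
this part by `uv` gives one of the old graph; in the other direction `uv` was a boundary edge, so
the old cycle uses it, and it can be rerouted through `z`.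

To make the induction start at a single edge, a Hamiltonian cycle is encoded as a Hamiltonian path
between adjacent vertices, which on two vertices degenerates to the edge itself.
-/


open SimpleGraph

/-- `H` (with vertex set `W`) is an `n`-pyramid: a 2-tree on `n + 2` vertices having an
edge `uv` such that `u` and `v` have exactly `n` common neighbors. -/
def IsNPyramid (n : ℕ) (W : Finset ℕ) (H : SimpleGraph ℕ) : Prop :=
  IsTwoTree W H ∧ W.card = n + 2 ∧
    ∃ u v, H.Adj u v ∧ (H.neighborSet u ∩ H.neighborSet v).ncard = n

/-- `G` (with vertex set `V`) contains an `n`-pyramid as an induced subgraph: there is a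
set of vertices `W ⊆ V` on which `G` induces an `n`-pyramid. -/
def ContainsNPyramid (V : Finset ℕ) (G : SimpleGraph ℕ) (n : ℕ) : Prop :=
  ∃ (W : Finset ℕ) (H : SimpleGraph ℕ), W ⊆ V ∧ IsNPyramid n W H ∧
    ∀ a b, a ∈ W → b ∈ W → (G.Adj a b ↔ H.Adj a b)

/-- `p` is a Hamiltonian path of the graph `G` with vertex set `V`: a path whose support
is exactly `V`. -/
def IsHamPathOn (V : Finset ℕ) {G : SimpleGraph ℕ} {s t : ℕ} (p : G.Walk s t) : Prop :=
  p.IsPath ∧ ∀ x, x ∈ p.support ↔ x ∈ V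

/-- `p` is a Hamiltonian cycle of the graph `G` with vertex set `V`: a cycle whose support
is exactly `V`. -/
def IsHamCycleOn (V : Finset ℕ) {G : SimpleGraph ℕ} {a : ℕ} (p : G.Walk a a) : Prop :=
  p.IsCycle ∧ ∀ x, x ∈ p.support ↔ x ∈ V

namespace TwoTree

/-- `c` is a common neighbour of `a` and `b`. -/
def CN (G : SimpleGraph ℕ) (a b c : ℕ) : Prop := G.Adj a c ∧ G.Adj b c

/-- `a` and `b` have at most one common neighbour. -/
def LeOne (G : SimpleGraph ℕ) (a b : ℕ) : Prop :=
  ∀ c d, CN G a b c → CN G a b d → c = d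

/-- `a` and `b` have at most two common neighbours. -/
def LeTwo (G : SimpleGraph ℕ) (a b : ℕ) : Prop :=
  ∀ c d e, CN G a b c → CN G a b d → CN G a b e → c = d ∨ c = e ∨ d = e

/-- `F` is the edge set of a Hamiltonian cycle of `G` on the vertex set `V`, encoded as a
Hamiltonian path together with an edge joining its ends. If `V` has two vertices this is a single
edge, traversed twice. -/
def HamEdges (V : Finset ℕ) (G : SimpleGraph ℕ) (F : Set (Sym2 ℕ)) : Prop :=
  ∃ (a b : ℕ) (_ : G.Adj a b) (p : G.Walk a b), IsHamPathOn V p ∧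
    F = {e | e ∈ p.edges ∨ e = s(a, b)}

/-! ### Structure of 2-trees -/

lemma grow_adj {G : SimpleGraph ℕ} {u v z : ℕ} (hzu : z ≠ u) (hzv : z ≠ v) (a b : ℕ) :
    (G ⊔ fromEdgeSet {s(z, u), s(z, v)}).Adj a b ↔
      G.Adj a b ∨ (a = z ∧ (b = u ∨ b = v)) ∨ (b = z ∧ (a = u ∨ a = v)) := by
  simp only [sup_adj, fromEdgeSet_adj, Set.mem_insert_iff, Set.mem_singleton_iff, Sym2.eq_iff]
  grind

lemma base_adj {u v : ℕ} (huv : u ≠ v) (a b : ℕ) :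
    (fromEdgeSet {s(u, v)}).Adj a b ↔ (a = u ∧ b = v) ∨ (a = v ∧ b = u) := by
  simp only [fromEdgeSet_adj, Set.mem_singleton_iff, Sym2.eq_iff]
  grind

lemma mem_of_adj {V : Finset ℕ} {G : SimpleGraph ℕ} (hG : IsTwoTree V G) {a b : ℕ}
    (h : G.Adj a b) : a ∈ V ∧ b ∈ V := by
  induction hG generalizing a b with
  | base u v huv => rw [base_adj huv] at h; grind
  | grow hG u v z huv hz hzu hzv ih =>
    rw [grow_adj hzu hzv] at h
    have := ih huv
    have := @ih a b
    grind

lemma no_K4 {V : Finset ℕ} {G : SimpleGraph ℕ} (hG : IsTwoTree V G) {a b c d : ℕ}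
    (hab : G.Adj a b) (hac : G.Adj a c) (had : G.Adj a d) (hbc : G.Adj b c) (hbd : G.Adj b d)
    (hcd : G.Adj c d) : False := by
  induction hG generalizing a b c d with
  | base u v huv => simp only [base_adj huv] at *; grind
  | @grow V G hG u v z huv hz hzu hzv ih =>
    have nz : ∀ x, ¬ G.Adj z x := fun x hx => hz (mem_of_adj hG hx).1
    have zn : ∀ x, ¬ G.Adj x z := fun x hx => hz (mem_of_adj hG hx).2
    have h1 := hab.ne
    have h2 := hac.ne
    have h3 := had.ne
    have h4 := hbc.ne
    have h5 := hbd.ne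
    have h6 := hcd.ne
    simp only [grow_adj hzu hzv] at *
    have := @ih a b c d
    grind

lemma eq_or_exists_CN {V : Finset ℕ} {G : SimpleGraph ℕ} (hG : IsTwoTree V G) {a b : ℕ}
    (h : G.Adj a b) : V = {a, b} ∨ ∃ c, CN G a b c := by
  induction hG generalizing a b with
  | base u v huv => rw [base_adj huv] at h; grind
  | @grow V G hG u v z huv hz hzu hzv ih =>
    right
    have huv' := huv.symm
    simp only [grow_adj hzu hzv, CN] at *
    rcases h with h | ⟨rfl, rfl | rfl⟩ | ⟨rfl, rfl | rfl⟩
    · rcases ih h with rfl | ⟨c, hc⟩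
      · have := mem_of_adj hG huv
        have := huv.ne
        exact ⟨z, by grind⟩
      · exact ⟨c, by grind⟩
    · exact ⟨v, by grind⟩
    · exact ⟨u, by grind⟩
    · exact ⟨v, by grind⟩
    · exact ⟨u, by grind⟩

/-- Three common neighbours of an edge are pairwise non-adjacent, so the five vertices induce a
3-pyramid. -/
lemma containsNPyramid_three_iff {V : Finset ℕ} {G : SimpleGraph ℕ} (hG : IsTwoTree V G) :
    ¬ ContainsNPyramid V G 3 ↔ ∀ a b, G.Adj a b → LeTwo G a b := by
  constructor
  · intro h a b hab c d e hc hd he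
    by_contra! hne
    obtain ⟨hcd, hce, hde⟩ := hne
    obtain ⟨hac, hbc⟩ := hc
    obtain ⟨had, hbd⟩ := hd
    obtain ⟨hae, hbe⟩ := he
    have ncd : ¬ G.Adj c d := fun h => no_K4 hG hab hac had hbc hbd h
    have nce : ¬ G.Adj c e := fun h => no_K4 hG hab hac hae hbc hbe h
    have nde : ¬ G.Adj d e := fun h => no_K4 hG hab had hae hbd hbe h
    have h0 := IsTwoTree.base a b hab.ne
    have h1 := h0.grow a b c (by rw [base_adj hab.ne]; simp)
      (by simp [hac.ne', hbc.ne']) hac.ne' hbc.ne'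
    have h2 := h1.grow a b d (by simp only [grow_adj hac.ne' hbc.ne', base_adj hab.ne]; simp)
      (by simp [had.ne', hbd.ne', hcd.symm]) had.ne' hbd.ne'
    have h3 := h2.grow a b e
      (by simp only [grow_adj had.ne' hbd.ne', grow_adj hac.ne' hbc.ne', base_adj hab.ne]; simp)
      (by simp [hae.ne', hbe.ne', hce.symm, hde.symm]) hae.ne' hbe.ne'
    have := hab.ne
    have := hac.ne
    have := hbc.ne
    have := had.ne
    have := hbd.ne
    have := hae.ne
    have := hbe.ne
    refine h ⟨_, _, ?_, ⟨h3, ?_, a, b, ?_, ?_⟩, ?_⟩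
    · have := mem_of_adj hG hac
      have := mem_of_adj hG hbd
      have := mem_of_adj hG hae
      simp only [Finset.insert_subset_iff, Finset.singleton_subset_iff]
      tauto
    · clear h0 h1 h2 h3
      grind
    · simp only [grow_adj hae.ne' hbe.ne', grow_adj had.ne' hbd.ne', grow_adj hac.ne' hbc.ne',
        base_adj hab.ne]
      simp
    · rw [Set.ncard_eq_three]
      refine ⟨c, d, e, hcd, hce, hde, ?_⟩
      ext x
      simp only [Set.mem_inter_iff, mem_neighborSet, grow_adj hae.ne' hbe.ne',
        grow_adj had.ne' hbd.ne', grow_adj hac.ne' hbc.ne', base_adj hab.ne,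
        Set.mem_insert_iff, Set.mem_singleton_iff]
      grind
    · intro x y hx hy
      simp only [grow_adj hae.ne' hbe.ne', grow_adj had.ne' hbd.ne', grow_adj hac.ne' hbc.ne',
        base_adj hab.ne]
      simp only [Finset.mem_insert, Finset.mem_singleton] at hx hy
      rcases hx with rfl | rfl | rfl | rfl | rfl <;>
        rcases hy with rfl | rfl | rfl | rfl | rfl <;> grind [SimpleGraph.irrefl, adj_comm]
  · rintro h ⟨W, H, -, ⟨hH, -, u, v, huv, hcard⟩, hind⟩
    obtain ⟨x, y, z, hxy, hxz, hyz, hs⟩ := Set.ncard_eq_three.1 hcard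
    have key : ∀ w ∈ ({x, y, z} : Set ℕ), CN G u v w := by
      intro w hw
      rw [← hs] at hw
      have h1 := mem_of_adj hH hw.1
      have h2 := mem_of_adj hH hw.2
      exact ⟨(hind _ _ h1.1 h1.2).2 hw.1, (hind _ _ h2.1 h2.2).2 hw.2⟩
    have hm := mem_of_adj hH huv
    have := h u v ((hind _ _ hm.1 hm.2).2 huv) x y z (key _ (by simp)) (key _ (by simp))
      (key _ (by simp))
    grind

/-! ### Hamiltonian cycles as edge sets -/

lemma exists_split {G : SimpleGraph ℕ} {a b u v : ℕ} (p : G.Walk a b) (h : s(u, v) ∈ p.edges) :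
    (∃ (huv : G.Adj u v) (p1 : G.Walk a u) (p2 : G.Walk v b), p = p1.append (.cons huv p2)) ∨
    (∃ (huv : G.Adj v u) (p1 : G.Walk a v) (p2 : G.Walk u b), p = p1.append (.cons huv p2)) := by
  induction p with
  | nil => simp at h
  | @cons x y w hxy q ih =>
    rw [Walk.edges_cons, List.mem_cons, Sym2.eq_iff] at h
    rcases h with (⟨rfl, rfl⟩ | ⟨rfl, rfl⟩) | h
    · exact .inl ⟨hxy, .nil, q, rfl⟩
    · exact .inr ⟨hxy, .nil, q, rfl⟩
    · rcases ih h with ⟨huv, p1, p2, rfl⟩ | ⟨huv, p1, p2, rfl⟩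
      · exact .inl ⟨huv, .cons hxy p1, p2, rfl⟩
      · exact .inr ⟨huv, .cons hxy p1, p2, rfl⟩

lemma isHamPathOn_reverse {V : Finset ℕ} {G : SimpleGraph ℕ} {a b : ℕ} {p : G.Walk a b}
    (hp : IsHamPathOn V p) : IsHamPathOn V p.reverse :=
  ⟨hp.1.reverse, by simpa using hp.2⟩

/-- Deleting any one edge of a Hamiltonian cycle leaves a Hamiltonian path between its ends. -/
lemma HamEdges.rotate {V : Finset ℕ} {G : SimpleGraph ℕ} {F : Set (Sym2 ℕ)}
    (hF : HamEdges V G F) {u v : ℕ} (huv : s(u, v) ∈ F) :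
    ∃ p : G.Walk u v, IsHamPathOn V p ∧ F = {e | e ∈ p.edges ∨ e = s(u, v)} := by
  obtain ⟨a, b, hab, p, hp, rfl⟩ := hF
  have rot : ∀ {x y : ℕ} (hxy : G.Adj x y) (p1 : G.Walk a x) (p2 : G.Walk y b),
      p = p1.append (.cons hxy p2) → ∃ q : G.Walk y x, IsHamPathOn V q ∧
        {e | e ∈ p.edges ∨ e = s(a, b)} = {e | e ∈ q.edges ∨ e = s(y, x)} := by
    rintro x y hxy p1 p2 rfl
    refine ⟨p2.append (.cons hab.symm p1), ⟨?_, ?_⟩, ?_⟩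
    · have := hp.1
      rw [Walk.isPath_def] at this ⊢
      rw [Walk.support_append] at this ⊢
      simp only [Walk.support_cons, List.tail_cons] at this ⊢
      exact List.perm_append_comm.nodup_iff.1 this
    · intro w
      rw [← hp.2 w]
      simp only [Walk.support_append, Walk.support_cons, List.tail_cons, List.mem_append]
      tauto
    · ext e
      simp only [Walk.edges_append, Walk.edges_cons, List.mem_append, List.mem_cons,
        Set.mem_ofPred_eq, Sym2.eq_swap (a := b), Sym2.eq_swap (a := y)]
      tauto
  rcases huv with h | h
  · rcases exists_split p h with ⟨h, p1, p2, e⟩ | ⟨h, p1, p2, e⟩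
    · obtain ⟨q, hq, e'⟩ := rot h p1 p2 e
      refine ⟨q.reverse, isHamPathOn_reverse hq, ?_⟩
      rw [e', Sym2.eq_swap]
      simp
    · exact rot h p1 p2 e
  · rcases Sym2.eq_iff.1 h with ⟨rfl, rfl⟩ | ⟨rfl, rfl⟩
    · exact ⟨p, hp, rfl⟩
    · refine ⟨p.reverse, isHamPathOn_reverse hp, ?_⟩
      rw [Sym2.eq_swap]
      simp

lemma HamEdges.exists_mem {V : Finset ℕ} {G : SimpleGraph ℕ} {F : Set (Sym2 ℕ)}
    (hF : HamEdges V G F) {z : ℕ} (hz : z ∈ V) : ∃ w, G.Adj z w ∧ s(z, w) ∈ F := by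
  obtain ⟨a, b, hab, p, hp, rfl⟩ := hF
  have hnil : ¬ p.Nil := fun h => hab.ne h.eq
  have := (hp.2 z).2 hz
  rw [Walk.mem_support_iff_exists_mem_edges_of_not_nil hnil] at this
  obtain ⟨e, he, hze⟩ := this
  obtain ⟨w, rfl⟩ := hze
  exact ⟨w, p.adj_of_mem_edges he, .inl he⟩

lemma eq_pair_of_mem_edges {V : Finset ℕ} {G : SimpleGraph ℕ} {a b : ℕ} {p : G.Walk a b}
    (hp : IsHamPathOn V p) (h : s(a, b) ∈ p.edges) : V = {a, b} := by
  ext x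
  rw [← hp.2, hp.1.eq_adj_toWalk_of_mem_edges h]
  simp

lemma exists_hamCycle_iff {V : Finset ℕ} {G : SimpleGraph ℕ} (hcard : 3 ≤ V.card) :
    (∃ (a : ℕ) (p : G.Walk a a), IsHamCycleOn V p) ↔ ∃ F, HamEdges V G F := by
  constructor
  · rintro ⟨a, p, hp, hs⟩
    cases p with
    | nil => exact absurd hp (by simp)
    | cons h q =>
      rw [Walk.cons_isCycle_iff] at hp
      refine ⟨_, _, _, h.symm, q, ⟨hp.1, fun x => ?_⟩, rfl⟩
      rw [← hs, Walk.support_cons, List.mem_cons]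
      have := q.end_mem_support
      grind
  · rintro ⟨F, a, b, hab, p, hp, -⟩
    refine ⟨b, .cons hab.symm p, ?_, fun x => ?_⟩
    · rw [Walk.cons_isCycle_iff]
      refine ⟨hp.1, fun h => ?_⟩
      rw [Sym2.eq_swap] at h
      rw [eq_pair_of_mem_edges hp h] at hcard
      have := Finset.card_le_two (a := a) (b := b)
      omega
    · rw [← hp.2, Walk.support_cons, List.mem_cons]
      have := p.end_mem_support
      grind

/-! ### The induction -/

/-- Attaching `z` to the edge `uv` changes common neighbours only for `uv`. -/
lemma grow_CN {V : Finset ℕ} {G : SimpleGraph ℕ} (hG : IsTwoTree V G) {u v z : ℕ}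
    (hz : z ∉ V) (hzu : z ≠ u) (hzv : z ≠ v) {a b : ℕ} (hab : G.Adj a b) (c : ℕ) :
    CN (G ⊔ fromEdgeSet {s(z, u), s(z, v)}) a b c ↔
      CN G a b c ∨ (c = z ∧ s(a, b) = s(u, v)) := by
  have nz : ∀ x, ¬ G.Adj x z := fun x hx => hz (mem_of_adj hG hx).2
  have := mem_of_adj hG hab
  have := hab.ne
  simp only [CN, grow_adj hzu hzv, Sym2.eq_iff]
  grind

/-- The two edges created together with `z` are boundary edges. -/
lemma grow_leOne {V : Finset ℕ} {G : SimpleGraph ℕ} (hG : IsTwoTree V G) {u v z : ℕ}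
    (hz : z ∉ V) (hzu : z ≠ u) (hzv : z ≠ v) {a b : ℕ}
    (h : s(a, b) = s(z, u) ∨ s(a, b) = s(z, v)) :
    LeOne (G ⊔ fromEdgeSet {s(z, u), s(z, v)}) a b := by
  have nz : ∀ x, ¬ G.Adj z x := fun x hx => hz (mem_of_adj hG hx).1
  have irr : ∀ x, ¬ G.Adj x x := fun x => G.irrefl
  simp only [LeOne, CN, grow_adj hzu hzv]
  simp only [Sym2.eq_iff] at h
  grind

/-- A Hamiltonian cycle through the edge `zu` of the enlarged graph also uses `zv`, and replacing
these two edges by `uv` gives a Hamiltonian cycle of the original graph. -/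
lemma HamEdges.shrink {V : Finset ℕ} {G : SimpleGraph ℕ} (hG : IsTwoTree V G) {u v z : ℕ}
    (huv : G.Adj u v) (hz : z ∉ V) (hzu : z ≠ u) (hzv : z ≠ v) {F : Set (Sym2 ℕ)}
    (hF : HamEdges (insert z V) (G ⊔ fromEdgeSet {s(z, u), s(z, v)}) F) (h : s(z, u) ∈ F) :
    ∃ q : G.Walk u v, IsHamPathOn V q ∧
      F = {e | e ∈ q.edges ∨ e = s(z, u) ∨ e = s(z, v)} := by
  have hm := mem_of_adj hG huv
  have nz : ∀ x, ¬ G.Adj z x := fun x hx => hz (mem_of_adj hG hx).1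
  obtain ⟨p, ⟨hp, hs⟩, rfl⟩ := hF.rotate h
  cases p with
  | nil => exact absurd rfl hzu
  | @cons _ w _ hw q =>
    rw [Walk.cons_isPath_iff] at hp
    have hwv : w = u ∨ w = v := by
      have := nz w
      rw [grow_adj hzu hzv] at hw
      grind
    rcases hwv with rfl | rfl
    · -- If `u` followed `z` directly, the path would miss `v`.
      have hq := (Walk.isPath_iff_nil.1 hp.1).eq_nil
      have := (hs v).2 (by grind)
      rw [hq] at this
      simp [hzv.symm, huv.ne'] at this
    · have hedge : ∀ e ∈ q.edges, e ∈ G.edgeSet := by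
        intro e he
        induction e with
        | _ x y =>
          have h1 := q.fst_mem_support_of_mem_edges he
          have h2 := q.snd_mem_support_of_mem_edges he
          have h3 := q.adj_of_mem_edges he
          rw [grow_adj hzu hzv] at h3
          rw [mem_edgeSet]
          grind
      refine ⟨(q.transfer G hedge).reverse, isHamPathOn_reverse ⟨hp.1.transfer hedge, ?_⟩, ?_⟩
      · intro x
        have := hs x
        rw [Walk.support_cons] at this
        rw [Walk.support_transfer]
        grind
      · ext e
        simp only [Walk.edges_cons, List.mem_cons, Set.mem_ofPred_eq, Walk.edges_reverse,
          Walk.edges_transfer, List.mem_reverse]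
        tauto

/-- If a 2-tree has a Hamiltonian cycle, then every edge has at most two common neighbours, and
the edges of the cycle have at most one. -/
lemma HamEdges.boundary {V : Finset ℕ} {G : SimpleGraph ℕ} (hG : IsTwoTree V G)
    {F : Set (Sym2 ℕ)} (hF : HamEdges V G F) :
    (∀ a b, G.Adj a b → LeTwo G a b) ∧ ∀ a b, s(a, b) ∈ F → LeOne G a b := by
  induction hG generalizing F with
  | base u v huv =>
    simp only [LeTwo, LeOne, CN, base_adj huv]
    grind
  | @grow V G hG u v z huv hz hzu hzv ih =>
    obtain ⟨q, hq, rfl⟩ : ∃ q : G.Walk u v, IsHamPathOn V q ∧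
        F = {e | e ∈ q.edges ∨ e = s(z, u) ∨ e = s(z, v)} := by
      obtain ⟨w, hw, hwF⟩ := hF.exists_mem (Finset.mem_insert_self z V)
      have nz : ¬ G.Adj z w := fun hx => hz (mem_of_adj hG hx).1
      have hwv : w = u ∨ w = v := by
        rw [grow_adj hzu hzv] at hw
        grind
      rcases hwv with rfl | rfl
      · exact HamEdges.shrink hG huv hz hzu hzv hF hwF
      · rw [Set.pair_comm] at hF
        obtain ⟨q, hq, rfl⟩ := HamEdges.shrink hG huv.symm hz hzv hzu hF hwF
        refine ⟨q.reverse, isHamPathOn_reverse hq, ?_⟩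
        ext e
        simp only [Set.mem_ofPred_eq, Walk.edges_reverse, List.mem_reverse]
        tauto
    obtain ⟨ih2, ih1⟩ := ih ⟨u, v, huv, q, hq, rfl⟩
    refine ⟨fun a b hab => ?_, fun a b hab => ?_⟩
    · by_cases hab' : G.Adj a b
      · have ih2' := ih2 a b hab'
        have sw : s(a, b) = s(u, v) → LeOne G a b := fun h => ih1 a b (.inr h)
        intro c d e
        simp only [grow_CN hG hz hzu hzv hab']
        have := ih2' c d e
        by_cases hs : s(a, b) = s(u, v)
        · have s1 := sw hs c d
          have s2 := sw hs c e
          have s3 := sw hs d e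
          grind
        · grind
      · have one := grow_leOne hG hz hzu hzv (a := a) (b := b) (by
          rw [grow_adj hzu hzv] at hab
          simp only [Sym2.eq_iff]
          grind)
        exact fun c d e hc hd he => .inl (one c d hc hd)
    · rcases hab with h | h
      · have hab' : G.Adj a b := q.adj_of_mem_edges h
        intro c d
        simp only [grow_CN hG hz hzu hzv hab']
        by_cases hs : s(a, b) = s(u, v)
        · -- A Hamiltonian path from `u` to `v` through the edge `uv` is that edge alone.
          rw [hs] at h
          have hV := eq_pair_of_mem_edges hq h
          have no : ∀ x, ¬ CN G a b x := by
            intro x hx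
            have h1 := mem_of_adj hG hx.1
            have h2 := mem_of_adj hG hx.2
            have := hx.1.ne
            have := hx.2.ne
            have := hab'.ne
            grind
          have := no c
          have := no d
          grind
        · have := ih1 a b (.inl h) c d
          grind
      · exact grow_leOne hG hz hzu hzv h

/-- If every edge of a 2-tree has at most two common neighbours, then some Hamiltonian cycle uses
all edges with at most one common neighbour. -/
lemma exists_hamEdges {V : Finset ℕ} {G : SimpleGraph ℕ} (hG : IsTwoTree V G)
    (hle : ∀ a b, G.Adj a b → LeTwo G a b) :
    ∃ F, HamEdges V G F ∧ ∀ a b, G.Adj a b → LeOne G a b → s(a, b) ∈ F := by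
  induction hG with
  | base u v huv =>
    have h : (fromEdgeSet {s(u, v)}).Adj u v := by rw [base_adj huv]; simp
    refine ⟨_, ⟨u, v, h, h.toWalk, ⟨?_, by simp⟩, rfl⟩, ?_⟩
    · simp [huv]
    · intro a b hab _
      rw [base_adj huv] at hab
      right
      rw [Sym2.eq_iff]
      exact hab
  | @grow V G hG u v z huv hz hzu hzv ih =>
    have hm := mem_of_adj hG huv
    obtain ⟨F, hF, hall⟩ := ih (fun a b hab c d e hc hd he => by
      apply hle a b (.inl hab) <;> rw [grow_CN hG hz hzu hzv hab] <;> exact .inl ‹_›)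
    have one_uv : LeOne G u v := by
      intro c d hc hd
      have h1 := mem_of_adj hG hc.1
      have h2 := mem_of_adj hG hd.1
      have := hle u v (.inl huv) c d z
      simp only [grow_CN hG hz hzu hzv huv] at this
      grind
    obtain ⟨p, hp, rfl⟩ := hF.rotate (hall u v huv one_uv)
    have hle' : G ≤ G ⊔ fromEdgeSet {s(z, u), s(z, v)} := le_sup_left
    have azu : (G ⊔ fromEdgeSet {s(z, u), s(z, v)}).Adj z u := by
      rw [grow_adj hzu hzv]; simp
    have azv : (G ⊔ fromEdgeSet {s(z, u), s(z, v)}).Adj z v := by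
      rw [grow_adj hzu hzv]; simp
    refine ⟨_, ⟨z, v, azv, .cons azu (p.mapLe hle'), ⟨?_, ?_⟩, rfl⟩, ?_⟩
    · rw [Walk.cons_isPath_iff]
      refine ⟨hp.1.mapLe hle', ?_⟩
      rw [Walk.support_mapLe_eq_support, hp.2]
      exact hz
    · intro x
      rw [Walk.support_cons, Walk.support_mapLe_eq_support, List.mem_cons, hp.2,
        Finset.mem_insert]
    · intro a b hab hone
      simp only [Set.mem_ofPred_eq, Walk.edges_cons, Walk.edges_mapLe_eq_edges, List.mem_cons]
      by_cases hab' : G.Adj a b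
      · have hone' : LeOne G a b := fun c d hc hd => hone c d
          ((grow_CN hG hz hzu hzv hab' c).2 (.inl hc)) ((grow_CN hG hz hzu hzv hab' d).2 (.inl hd))
        rcases hall a b hab' hone' with h | h
        · exact .inl (.inr h)
        · -- `uv` is still a boundary edge after gaining `z`, so it had no common neighbour and
          -- `V = {u, v}`.
          rcases eq_or_exists_CN hG hab' with hV | ⟨c, hc⟩
          · left; right
            rw [h]
            have hnil : ¬ p.Nil := fun h => huv.ne h.eq
            obtain ⟨e, he, hue⟩ :=
              (Walk.mem_support_iff_exists_mem_edges_of_not_nil hnil).1 p.start_mem_support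
            obtain ⟨w, rfl⟩ := hue
            have h1 := p.adj_of_mem_edges he
            have h2 := mem_of_adj hG h1
            have := h1.ne
            have : w = v := by
              rw [Sym2.eq_iff] at h
              grind
            rwa [this] at he
          · have hcz := hone c z ((grow_CN hG hz hzu hzv hab' c).2 (.inl hc))
              ((grow_CN hG hz hzu hzv hab' z).2 (.inr ⟨rfl, h⟩))
            have := mem_of_adj hG hc.1
            grind
      · rw [grow_adj hzu hzv] at hab
        simp only [Sym2.eq_iff]
        grind

end TwoTree

/-- A 2-tree on at least 3 vertices has a Hamiltonian cycle if and only if it is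
3-pyramid free. -/
theorem two_tree_hamiltonian_cycle_iff_three_pyramid_free
    (V : Finset ℕ) (G : SimpleGraph ℕ) (hG : IsTwoTree V G) (hcard : 3 ≤ V.card) :
    (∃ (a : ℕ) (p : G.Walk a a), IsHamCycleOn V p) ↔ ¬ ContainsNPyramid V G 3 := by
  rw [TwoTree.exists_hamCycle_iff hcard, TwoTree.containsNPyramid_three_iff hG]
  exact ⟨fun ⟨_, hF⟩ => (TwoTree.HamEdges.boundary hG hF).1,
    fun h => (TwoTree.exists_hamEdges hG h).imp fun _ hF => hF.1⟩
end
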